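/- Let p be a probability distribution on ℝ^d with supp(p) ⊂ B_R(0), mean μ, and covariance Σ. Let m_σ(x) := E[X | X + σZ = x] be the optimal denoiser of p at noise level σ (with X ~ p, Z ~ N(0,I_d) independent), and let m_σ^G(x) := μ + Σ(Σ + σ²I)^{-1}(x − μ) be the optimal denoiser of the Gaussian N(μ, Σ). Then for any δ ∈ (0,1) there exist σ_0 > 0 with 1/(1+σ_0) ≤ δ and a bounded function H on the closed ball B̄_R(0) × [σ_0, ∞) with values in ℝ^d, obtained by composing a continuous bounded function on B̄_R(0) × [−δ, δ] with (x,σ) ↦ (x/(1+σ), 1/(1+σ)), such that m_σ(x) = m_σ^G(x) + H(x,σ)(1+σ)^{−2} for all x ∈ B̄_R(0) and σ ≥ σ_0. -/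

import Mathlib

open MeasureTheory ProbabilityTheory

noncomputable section

/-- The mean `μ = E_{X ~ p}[X]` of a measure `p` on `ℝ^d`. -/
def meanVec {d : ℕ} (p : Measure (EuclideanSpace ℝ (Fin d))) : EuclideanSpace ℝ (Fin d) :=
  ∫ y, y ∂p

/-- The covariance matrix `Σ = E[(X − μ)(X − μ)^T]` of a measure `p` on `ℝ^d`. -/
def covMatrix {d : ℕ} (p : Measure (EuclideanSpace ℝ (Fin d))) :
    Matrix (Fin d) (Fin d) ℝ :=
  Matrix.of fun i j => ∫ y, (y i - meanVec p i) * (y j - meanVec p j) ∂p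

/-- The optimal denoiser `m_σ(x) = E[X | X + σZ = x]` of `p` at noise level `σ`, given by the
posterior-mean formula
`m_σ(x) = (∫ e^{−‖x−y‖²/(2σ²)} dp(y))⁻¹ ∫ e^{−‖x−y‖²/(2σ²)} y dp(y)`. -/
def mSig {d : ℕ} (p : Measure (EuclideanSpace ℝ (Fin d))) (σ : ℝ)
    (x : EuclideanSpace ℝ (Fin d)) : EuclideanSpace ℝ (Fin d) :=
  (∫ y, Real.exp (-‖x - y‖ ^ 2 / (2 * σ ^ 2)) ∂p)⁻¹ •
    ∫ y, Real.exp (-‖x - y‖ ^ 2 / (2 * σ ^ 2)) • y ∂p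

/-- The optimal denoiser `m_σ^G(x) = μ + Σ(Σ + σ²I)⁻¹(x − μ)` of the Gaussian `N(μ, Σ)`. -/
def mSigG {d : ℕ} (μv : EuclideanSpace ℝ (Fin d)) (S : Matrix (Fin d) (Fin d) ℝ) (σ : ℝ)
    (x : EuclideanSpace ℝ (Fin d)) : EuclideanSpace ℝ (Fin d) :=
  μv + Matrix.toEuclideanLin (S * (S + σ ^ 2 • (1 : Matrix (Fin d) (Fin d) ℝ))⁻¹) (x - μv)

/-!
The posterior of `X` given `X + σZ = x` is `p` tilted by `σ⁻² (⟪x, y⟫ - ‖y‖² / 2)`. Expanding its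
mean to second order in the tilt, the first-order term pairs `σ⁻² ⟪x, y⟫` with `y - μ`, which gives
`σ⁻² Σ x`; with `x = (1 + σ) u`, the contribution of `‖y‖² / 2` and the second-order remainder are
both of order `(1 + σ)⁻²`, uniformly for bounded `u`. The Neumann expansion
`Σ (Σ + σ² I)⁻¹ = σ⁻² Σ - σ⁻⁴ Σ² (I + σ⁻² Σ)⁻¹` gives `μ + σ⁻² Σ x` for the Gaussian denoiser too,
with an error of the same kind.
-/

section SecondOrderRemainder

lemma continuous_dslope {𝕜 F : Type*} [NontriviallyNormedField 𝕜] [NormedAddCommGroup F]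
    [NormedSpace 𝕜 F] {f : 𝕜 → F} {a : 𝕜} (hf : Continuous f) (ha : DifferentiableAt 𝕜 f a) :
    Continuous (dslope f a) :=
  continuousOn_univ.1 <| (continuousOn_dslope Filter.univ_mem).2 ⟨hf.continuousOn, ha⟩

lemma exists_continuous_eq_add_sq_smul {𝕜 F : Type*} [NontriviallyNormedField 𝕜]
    [NormedAddCommGroup F] [NormedSpace 𝕜 F] {f : 𝕜 → F} {a : 𝕜} (hf : Continuous f)
    (ha : AnalyticAt 𝕜 f a) :
    ∃ φ : 𝕜 → F, Continuous φ ∧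
      ∀ z, f z = f a + (z - a) • deriv f a + (z - a) ^ 2 • φ z := by
  obtain ⟨P, hP⟩ := ha
  refine ⟨dslope (dslope f a) a,
    continuous_dslope (continuous_dslope hf hP.differentiableAt)
      hP.has_fpower_series_dslope_fslope.differentiableAt, fun z => ?_⟩
  rw [sq, mul_smul, sub_smul_dslope, dslope_same, smul_sub, sub_smul_dslope]
  abel

lemma exists_continuous_exp_eq :
    ∃ φ : ℝ → ℝ, Continuous φ ∧ ∀ z, Real.exp z = 1 + z + z ^ 2 * φ z := by
  simpa using exists_continuous_eq_add_sq_smul (a := 0) Real.continuous_exp analyticAt_rexp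

end SecondOrderRemainder

section CompactlySupported

variable {X Y F : Type*} [TopologicalSpace Y] [MeasurableSpace Y] [OpensMeasurableSpace Y]
  [NormedAddCommGroup F] {p : Measure Y} {K : Set Y}

lemma integrable_of_continuous_of_ae_mem [T2Space Y] [IsFiniteMeasure p] (hK : IsCompact K)
    (hp : ∀ᵐ y ∂p, y ∈ K) {f : Y → F} (hf : Continuous f) : Integrable f p := by
  rw [← Measure.restrict_eq_self_of_ae_mem hp]
  exact hf.continuousOn.integrableOn_compact' hK hK.measurableSet

variable [TopologicalSpace X] [FirstCountableTopology X] [LocallyCompactSpace X]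
  [NormedSpace ℝ F]

lemma continuous_integral_of_ae_mem [SecondCountableTopologyEither Y F] [IsFiniteMeasure p]
    (hK : IsCompact K) (hp : ∀ᵐ y ∂p, y ∈ K) {f : X → Y → F} (hf : Continuous f.uncurry) :
    Continuous fun x => ∫ y, f x y ∂p := by
  rw [← Measure.restrict_eq_self_of_ae_mem hp]
  exact continuous_parametric_integral_of_continuous hf hK

variable [T2Space Y] {t : X → ℝ} {a : X → Y → ℝ}

lemma exists_continuous_integral_exp_smul_eq [SecondCountableTopologyEither Y F]
    [IsFiniteMeasure p] (hK : IsCompact K) (hp : ∀ᵐ y ∂p, y ∈ K) (ht : Continuous t)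
    (ha : Continuous a.uncurry) {f : Y → F} (hf : Continuous f) :
    ∃ Q : X → F, Continuous Q ∧ ∀ x, ∫ y, Real.exp (t x * a x y) • f y ∂p =
      ∫ y, f y ∂p + t x • ∫ y, a x y • f y ∂p + t x ^ 2 • Q x := by
  obtain ⟨φ, hφ, hexp⟩ := exists_continuous_exp_eq
  refine ⟨fun x => ∫ y, (a x y ^ 2 * φ (t x * a x y)) • f y ∂p,
    continuous_integral_of_ae_mem hK hp (by fun_prop), fun x => ?_⟩
  have hax : Continuous (a x) := ha.uncurry_left x
  have expand (y : Y) : Real.exp (t x * a x y) • f y =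
      f y + t x • a x y • f y + t x ^ 2 • (a x y ^ 2 * φ (t x * a x y)) • f y := by
    rw [hexp]
    module
  have hint {g : Y → F} (hg : Continuous g) : Integrable g p :=
    integrable_of_continuous_of_ae_mem hK hp hg
  simp only [expand]
  rw [integral_add (hint (by fun_prop)) (hint (by fun_prop)),
    integral_add (hint (by fun_prop)) (hint (by fun_prop)), integral_smul, integral_smul]

lemma integral_tilted_eq_inv_smul {α : Type*} [MeasurableSpace α] (μ : Measure α) (b : α → ℝ)
    (f : α → F) : ∫ y, f y ∂(μ.tilted b) =
      (∫ y, Real.exp (b y) ∂μ)⁻¹ • ∫ y, Real.exp (b y) • f y ∂μ := by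
  simp only [integral_tilted, div_eq_inv_mul, mul_smul, integral_smul]

lemma exists_continuous_integral_tilted_eq_of_integral_eq_zero
    [SecondCountableTopologyEither Y F] [IsProbabilityMeasure p] (hK : IsCompact K)
    (hp : ∀ᵐ y ∂p, y ∈ K) (ht : Continuous t) (ha : Continuous a.uncurry) {f : Y → F}
    (hf : Continuous f) (hf₀ : ∫ y, f y ∂p = 0) :
    ∃ h : X → F, Continuous h ∧ ∀ x, ∫ y, f y ∂(p.tilted fun y => t x * a x y) =
      t x • ∫ y, a x y • f y ∂p + t x ^ 2 • h x := by
  obtain ⟨M, hM, numerator_eq⟩ := exists_continuous_integral_exp_smul_eq hK hp ht ha hf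
  obtain ⟨Q, hQ, denominator_eq⟩ :=
    exists_continuous_integral_exp_smul_eq hK hp ht ha (continuous_const (y := (1 : ℝ)))
  simp only [smul_eq_mul, mul_one, integral_const, probReal_univ] at denominator_eq
  simp only [hf₀, zero_add] at numerator_eq
  set D : X → ℝ := fun x => ∫ y, Real.exp (t x * a x y) ∂p
  set A : X → ℝ := fun x => ∫ y, a x y ∂p
  set L : X → F := fun x => ∫ y, a x y • f y ∂p
  have hD : Continuous D := continuous_integral_of_ae_mem hK hp (by fun_prop)
  have hA : Continuous A := continuous_integral_of_ae_mem hK hp ha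
  have hL : Continuous L := continuous_integral_of_ae_mem hK hp (by fun_prop)
  have hD₀ (x : X) : D x ≠ 0 := by
    have hax : Continuous (a x) := ha.uncurry_left x
    exact (integral_exp_pos (integrable_of_continuous_of_ae_mem hK hp (by fun_prop))).ne'
  refine ⟨fun x => (D x)⁻¹ • (M x - (A x + t x * Q x) • L x),
    (hD.inv₀ hD₀).smul (by fun_prop), fun x => ?_⟩
  have numerator_eq_smul : t x • L x + t x ^ 2 • M x =
      D x • t x • L x + t x ^ 2 • (M x - (A x + t x * Q x) • L x) := by
    rw [show D x = 1 + t x * A x + t x ^ 2 * Q x from denominator_eq x]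
    module
  rw [integral_tilted_eq_inv_smul, numerator_eq, numerator_eq_smul, smul_add,
    inv_smul_smul₀ (hD₀ x), smul_comm (D x)⁻¹]

lemma exists_continuous_integral_tilted_eq [CompleteSpace F] [SecondCountableTopologyEither Y F]
    [IsProbabilityMeasure p] (hK : IsCompact K) (hp : ∀ᵐ y ∂p, y ∈ K) (ht : Continuous t)
    (ha : Continuous a.uncurry) {f : Y → F} (hf : Continuous f) :
    ∃ h : X → F, Continuous h ∧ ∀ x, ∫ y, f y ∂(p.tilted fun y => t x * a x y) =
      ∫ y, f y ∂p + t x • ∫ y, a x y • (f y - ∫ z, f z ∂p) ∂p + t x ^ 2 • h x := by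
  obtain ⟨h, hh, centered_eq⟩ := exists_continuous_integral_tilted_eq_of_integral_eq_zero hK hp ht
    ha (hf.sub continuous_const) (f := fun y => f y - ∫ z, f z ∂p)
    (by simp [integral_sub (integrable_of_continuous_of_ae_mem hK hp hf) (integrable_const _)])
  refine ⟨h, hh, fun x => ?_⟩
  have hax : Continuous (a x) := ha.uncurry_left x
  have hexp : Integrable (fun y => Real.exp (t x * a x y)) p :=
    integrable_of_continuous_of_ae_mem hK hp (by fun_prop)
  have := isProbabilityMeasure_tilted hexp
  have hf_tilted : Integrable f (p.tilted fun y => t x * a x y) :=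
    (integrable_tilted_iff hexp f).2 (integrable_of_continuous_of_ae_mem hK hp (by fun_prop))
  rw [add_assoc, ← centered_eq, integral_sub hf_tilted (integrable_const _)]
  simp

end CompactlySupported

section Covariance

variable {d : ℕ} {p : Measure (EuclideanSpace ℝ (Fin d))}

lemma covMatrix_apply (hp : Integrable id p) (i j : Fin d) :
    covMatrix p i j = cov[fun y => y i, fun y => y j; p] := by
  have mean_apply (k : Fin d) : meanVec p k = ∫ y, y k ∂p :=
    eval_integral_piLp (Integrable.eval_piLp hp) k
  simp [covMatrix, covariance, mean_apply]

lemma inner_toEuclideanLin_covMatrix [IsFiniteMeasure p] (hp : MemLp id 2 p)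
    (u v : EuclideanSpace ℝ (Fin d)) :
    inner ℝ (Matrix.toEuclideanLin (covMatrix p) u) v = covarianceBilin p u v := by
  have bilin_eq := covarianceBilin_apply_pi (fun i => hp.eval_piLp i) u v
  simp only [id_eq, WithLp.toLp_ofLp, Measure.map_id'] at bilin_eq
  simp only [bilin_eq, Matrix.toLpLin_apply, PiLp.inner_apply, Matrix.mulVec, dotProduct,
    covMatrix_apply (hp.integrable one_le_two), RCLike.inner_apply, conj_trivial, Finset.mul_sum]
  rw [Finset.sum_comm]
  refine Finset.sum_congr rfl fun i _ => Finset.sum_congr rfl fun j _ => ?_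
  rw [covariance_comm]
  ring

lemma posSemidef_covMatrix [IsFiniteMeasure p] (hp : MemLp id 2 p) :
    (covMatrix p).PosSemidef := by
  rw [← Matrix.isPositive_toEuclideanLin_iff]
  refine ⟨fun u v => ?_, fun u => ?_⟩
  · rw [inner_toEuclideanLin_covMatrix hp, real_inner_comm, inner_toEuclideanLin_covMatrix hp,
      covarianceBilin_comm]
  · rw [inner_toEuclideanLin_covMatrix hp]
    exact covarianceBilin_self_nonneg u

lemma integral_sub_meanVec [IsProbabilityMeasure p] (hp : Integrable id p) :
    ∫ y, (y - meanVec p) ∂p = 0 := by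
  rw [integral_sub (show Integrable (fun y => y) p from hp) (integrable_const _)]
  simp [meanVec]

lemma toEuclideanLin_covMatrix_apply [IsProbabilityMeasure p] (hp : MemLp id 2 p)
    (u : EuclideanSpace ℝ (Fin d)) :
    Matrix.toEuclideanLin (covMatrix p) u = ∫ y, inner ℝ u y • (y - meanVec p) ∂p := by
  have hsub : MemLp (fun y => y - meanVec p) 2 p := hp.sub (memLp_const _)
  have hint {w : EuclideanSpace ℝ (Fin d) → ℝ} (hw : MemLp w 2 p) :
      Integrable (fun y => w y • (y - meanVec p)) p := memLp_one_iff_integrable.1 (hsub.smul hw)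
  have centering : ∫ y, inner ℝ u (y - meanVec p) • (y - meanVec p) ∂p =
      ∫ y, inner ℝ u y • (y - meanVec p) ∂p := by
    simp only [inner_sub_right, sub_smul]
    have hinner : MemLp (fun y => inner ℝ u y) 2 p := hp.const_inner u
    rw [integral_sub (hint hinner) (hint (memLp_const (inner ℝ u (meanVec p)))), integral_smul,
      integral_sub_meanVec (hp.integrable one_le_two), smul_zero, sub_zero]
  refine ext_inner_right ℝ fun v => ?_
  rw [inner_toEuclideanLin_covMatrix hp, covarianceBilin_apply hp, ← centering, real_inner_comm,
    ← integral_inner (hint (hsub.const_inner u))]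
  simp only [real_inner_smul_right, meanVec, id_eq]

end Covariance

section Excess

/-- The form of an excess term: `r σ x = (1 + σ)⁻² H(x / (1 + σ), 1 / (1 + σ))` for `σ > 0`, with
`H` continuous for second arguments below `1`. Second argument `0` is the limit `σ → ∞`, and `1` is
`σ = 0`, where `H` may be singular. -/
def IsExcess {E F : Type*} [NormedAddCommGroup E] [NormedSpace ℝ E] [NormedAddCommGroup F]
    [NormedSpace ℝ F] (r : ℝ → E → F) : Prop :=
  ∃ H : E → ℝ → F, ContinuousOn (fun q : E × ℝ => H q.1 q.2) (Set.univ ×ˢ Set.Iio 1) ∧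
    ∀ σ, 0 < σ → ∀ x, r σ x = ((1 + σ) ^ 2)⁻¹ • H ((1 + σ)⁻¹ • x) ((1 + σ)⁻¹)

namespace IsExcess

variable {E F : Type*} [NormedAddCommGroup E] [NormedSpace ℝ E] [NormedAddCommGroup F]
  [NormedSpace ℝ F] {r r' : ℝ → E → F}

-- With `t = 1 / (1 + σ)` and `e = 1 / (1 - t)` one has `σ = (t * e)⁻¹`; treating `e` as a free
-- variable removes the singularity at `t = 1`.
lemma of_continuous {G : E × ℝ × ℝ → F} (hG : Continuous G)
    (hr : ∀ x t e, 0 < t * e → r (t * e)⁻¹ x = t ^ 2 • G (t • x, t, e)) : IsExcess r := by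
  refine ⟨fun u t => G (u, t, (1 - t)⁻¹), ?_, fun σ hσ x => ?_⟩
  · refine hG.comp_continuousOn (continuousOn_fst.prodMk (continuousOn_snd.prodMk
      (ContinuousOn.inv₀ (by fun_prop) fun q hq => ?_)))
    exact (sub_pos.2 hq.2).ne'
  · have noise_eq : (1 + σ)⁻¹ * (1 - (1 + σ)⁻¹)⁻¹ = σ⁻¹ := by
      rw [← mul_inv, mul_sub, mul_inv_cancel₀ (by positivity), mul_one, add_sub_cancel_left]
    simpa only [noise_eq, inv_inv, inv_pow] using
      hr x (1 + σ)⁻¹ (1 - (1 + σ)⁻¹)⁻¹ (noise_eq ▸ inv_pos.2 hσ)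

lemma sub (hr : IsExcess r) (hr' : IsExcess r') : IsExcess fun σ x => r σ x - r' σ x := by
  obtain ⟨H, hH, r_eq⟩ := hr
  obtain ⟨H', hH', r'_eq⟩ := hr'
  refine ⟨fun u t => H u t - H' u t, hH.sub hH', fun σ hσ x => ?_⟩
  simp only [r_eq σ hσ, r'_eq σ hσ, smul_sub]

lemma exists_continuousOn_bounded (hr : IsExcess r) {K : Set E} (hK : IsCompact K) {δ : ℝ}
    (hδ : δ ∈ Set.Ioo 0 1) :
    ∃ σ₀ : ℝ, 0 < σ₀ ∧ 1 / (1 + σ₀) ≤ δ ∧ ∃ H : E → ℝ → F,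
      ContinuousOn (fun q : E × ℝ => H q.1 q.2) (K ×ˢ Set.Icc (-δ) δ) ∧
      (∃ C : ℝ, ∀ x ∈ K, ∀ t ∈ Set.Icc (-δ) δ, ‖H x t‖ ≤ C) ∧
      ∀ σ, σ₀ ≤ σ → ∀ x, r σ x = ((1 + σ) ^ 2)⁻¹ • H ((1 + σ)⁻¹ • x) ((1 + σ)⁻¹) := by
  obtain ⟨H, hH, r_eq⟩ := hr
  have hcont : ContinuousOn (fun q : E × ℝ => H q.1 q.2) (K ×ˢ Set.Icc (-δ) δ) :=
    hH.mono (Set.prod_mono K.subset_univ fun t ht => ht.2.trans_lt hδ.2)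
  obtain ⟨C, hC⟩ := (hK.prod isCompact_Icc).exists_bound_of_continuousOn hcont
  have hσ₀ : 0 < δ⁻¹ := inv_pos.2 hδ.1
  refine ⟨δ⁻¹, hσ₀, ?_, H, hcont, ⟨C, fun x hx t ht => hC (x, t) ⟨hx, ht⟩⟩,
    fun σ hσ => r_eq σ (hσ₀.trans_le hσ)⟩
  rw [one_div]
  exact inv_le_of_inv_le₀ hδ.1 (by linarith)

end IsExcess

end Excess

section GaussianDenoiser

lemma mul_inv_add_smul_one {n 𝕜 : Type*} [Fintype n] [DecidableEq n] [Field 𝕜]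
    {S : Matrix n n 𝕜} {c : 𝕜} (hc : c ≠ 0) (hS : IsUnit (1 + c • S).det) :
    S * (S + c⁻¹ • 1)⁻¹ = c • S - c ^ 2 • (S * S * (1 + c • S)⁻¹) := by
  have inv_eq : (S + c⁻¹ • 1)⁻¹ = c • (1 + c • S)⁻¹ := by
    refine Matrix.inv_eq_right_inv ?_
    rw [mul_smul_comm, ← smul_mul_assoc, smul_add, smul_inv_smul₀ hc, add_comm,
      Matrix.mul_nonsing_inv _ hS]
  have resolvent_eq : (1 + c • S)⁻¹ = 1 - c • (S * (1 + c • S)⁻¹) := by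
    rw [eq_sub_iff_add_eq, ← smul_mul_assoc]
    nth_rw 1 [← one_mul (1 + c • S)⁻¹]
    rw [← add_mul, Matrix.mul_nonsing_inv _ hS]
  rw [inv_eq]
  nth_rw 1 [resolvent_eq]
  rw [smul_sub, mul_sub, smul_smul, mul_smul_comm, mul_smul_comm, mul_one, sq, mul_assoc]

variable {n : Type*} [Fintype n] [DecidableEq n] {S : Matrix n n ℝ}

lemma isUnit_det_one_add_sq_smul (hS : S.PosSemidef) (c : ℝ) : IsUnit (1 + c ^ 2 • S).det :=
  (Matrix.isUnit_iff_isUnit_det _).1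
    (Matrix.PosDef.one.add_posSemidef (hS.smul (sq_nonneg c))).isUnit

variable {X : Type*} [TopologicalSpace X]

lemma continuous_inv_one_add_sq_smul (hS : S.PosSemidef) {c : X → ℝ} (hc : Continuous c) :
    Continuous fun x => (1 + c x ^ 2 • S)⁻¹ := by
  have hadd : Continuous fun x => 1 + c x ^ 2 • S := by fun_prop
  refine continuous_iff_continuousAt.2 fun x => ContinuousAt.comp (g := Inv.inv)
    (continuousAt_matrix_inv _ ?_) hadd.continuousAt
  rw [Ring.inverse_eq_inv']
  exact continuousAt_inv₀ (isUnit_det_one_add_sq_smul hS (c x)).ne_zero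

lemma continuous_toEuclideanLin_apply {A : X → Matrix n n ℝ} {v : X → EuclideanSpace ℝ n}
    (hA : Continuous A) (hv : Continuous v) :
    Continuous fun x => Matrix.toEuclideanLin (A x) (v x) := by
  simp only [Matrix.toLpLin_apply]
  exact (PiLp.continuous_toLp 2 _).comp (hA.matrix_mulVec (by fun_prop))

variable {d : ℕ} {S : Matrix (Fin d) (Fin d) ℝ}

lemma mSigG_inv (hS : S.PosSemidef) (m x : EuclideanSpace ℝ (Fin d)) {c : ℝ} (hc : c ≠ 0) :
    mSigG m S c⁻¹ x = m + (c ^ 2 • Matrix.toEuclideanLin S (x - m) -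
      c ^ 4 • Matrix.toEuclideanLin (S * S * (1 + c ^ 2 • S)⁻¹) (x - m)) := by
  rw [mSigG, inv_pow, mul_inv_add_smul_one (pow_ne_zero 2 hc) (isUnit_det_one_add_sq_smul hS c),
    ← pow_mul, map_sub Matrix.toEuclideanLin, map_smul, map_smul]
  rfl

lemma isExcess_mSigG_sub (hS : S.PosSemidef) (m : EuclideanSpace ℝ (Fin d)) :
    IsExcess fun σ x => mSigG m S σ x - (m + (σ⁻¹) ^ 2 • Matrix.toEuclideanLin S x) := by
  have hresolvent : Continuous fun q : EuclideanSpace ℝ (Fin d) × ℝ × ℝ =>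
      S * S * (1 + (q.2.1 * q.2.2) ^ 2 • S)⁻¹ :=
    continuous_const.matrix_mul (continuous_inv_one_add_sq_smul hS (by fun_prop))
  have hremainder : Continuous fun q : EuclideanSpace ℝ (Fin d) × ℝ × ℝ =>
      Matrix.toEuclideanLin (S * S * (1 + (q.2.1 * q.2.2) ^ 2 • S)⁻¹)
        (q.2.1 • q.1 - q.2.1 ^ 2 • m) :=
    continuous_toEuclideanLin_apply hresolvent (by fun_prop)
  have hG : Continuous fun q : EuclideanSpace ℝ (Fin d) × ℝ × ℝ =>
      -(q.2.2 ^ 2 • Matrix.toEuclideanLin S m) -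
        q.2.2 ^ 4 • Matrix.toEuclideanLin (S * S * (1 + (q.2.1 * q.2.2) ^ 2 • S)⁻¹)
          (q.2.1 • q.1 - q.2.1 ^ 2 • m) :=
    .sub (by fun_prop) (.fun_smul (by fun_prop) hremainder)
  refine .of_continuous hG fun x t e hte => ?_
  rw [mSigG_inv hS m x hte.ne', inv_inv]
  simp only [map_sub, map_smul]
  module

end GaussianDenoiser

section Denoiser

variable {d : ℕ} {p : Measure (EuclideanSpace ℝ (Fin d))} {K : Set (EuclideanSpace ℝ (Fin d))}

lemma mSig_eq_integral_tilted (p : Measure (EuclideanSpace ℝ (Fin d))) (σ : ℝ)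
    (x : EuclideanSpace ℝ (Fin d)) :
    mSig p σ x = ∫ y, y ∂(p.tilted fun y => (σ⁻¹) ^ 2 * (inner ℝ x y - ‖y‖ ^ 2 / 2)) := by
  have weight_eq (y : EuclideanSpace ℝ (Fin d)) : Real.exp (-‖x - y‖ ^ 2 / (2 * σ ^ 2)) =
      Real.exp (-((σ⁻¹) ^ 2 * (‖x‖ ^ 2 / 2))) *
        Real.exp ((σ⁻¹) ^ 2 * (inner ℝ x y - ‖y‖ ^ 2 / 2)) := by
    rw [← Real.exp_add, norm_sub_sq_real, div_eq_mul_inv, mul_inv, ← inv_pow]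
    ring_nf
  simp only [mSig, weight_eq, mul_smul, integral_const_mul, integral_smul, mul_inv_rev]
  rw [inv_smul_smul₀ (Real.exp_ne_zero _), integral_tilted_eq_inv_smul]

lemma memLp_two_id_of_ae_mem [IsFiniteMeasure p] (hK : IsCompact K) (hp : ∀ᵐ y ∂p, y ∈ K) :
    MemLp id 2 p :=
  (memLp_two_iff_integrable_sq_norm aestronglyMeasurable_id).2
    (integrable_of_continuous_of_ae_mem hK hp (by fun_prop))

variable [IsProbabilityMeasure p]

lemma integral_inner_sub_sq_smul (hK : IsCompact K) (hp : ∀ᵐ y ∂p, y ∈ K)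
    (u : EuclideanSpace ℝ (Fin d)) (c t : ℝ) :
    ∫ y, (c * (inner ℝ u y - t * (‖y‖ ^ 2 / 2))) • (y - meanVec p) ∂p =
      c • Matrix.toEuclideanLin (covMatrix p) u -
        (c * t) • ∫ y, (‖y‖ ^ 2 / 2) • (y - meanVec p) ∂p := by
  rw [toEuclideanLin_covMatrix_apply (memLp_two_id_of_ae_mem hK hp), ← integral_smul,
    ← integral_smul, ← integral_sub]
  · congr with y : 1
    module
  all_goals exact integrable_of_continuous_of_ae_mem hK hp (by fun_prop)

lemma isExcess_mSig_sub (hK : IsCompact K) (hp : ∀ᵐ y ∂p, y ∈ K) :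
    IsExcess fun σ x => mSig p σ x -
      (meanVec p + (σ⁻¹) ^ 2 • Matrix.toEuclideanLin (covMatrix p) x) := by
  obtain ⟨h, hh, tilted_eq⟩ := exists_continuous_integral_tilted_eq
    (X := EuclideanSpace ℝ (Fin d) × ℝ × ℝ) (t := fun q => q.2.1)
    (a := fun q y => q.2.2 ^ 2 * (inner ℝ q.1 y - q.2.1 * (‖y‖ ^ 2 / 2)))
    hK hp (by fun_prop) (by fun_prop) continuous_id'
  set V : EuclideanSpace ℝ (Fin d) := ∫ y, (‖y‖ ^ 2 / 2) • (y - meanVec p) ∂p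
  refine .of_continuous (G := fun q => h q - q.2.2 ^ 2 • V) (by fun_prop) fun x t e _ => ?_
  have weight_eq (y : EuclideanSpace ℝ (Fin d)) : (t * e) ^ 2 * (inner ℝ x y - ‖y‖ ^ 2 / 2) =
      t * (e ^ 2 * (inner ℝ (t • x) y - t * (‖y‖ ^ 2 / 2))) := by
    rw [real_inner_smul_left]
    ring
  have mSig_eq : mSig p (t * e)⁻¹ x = meanVec p +
      t • (e ^ 2 • Matrix.toEuclideanLin (covMatrix p) (t • x) - (e ^ 2 * t) • V) +
        t ^ 2 • h (t • x, t, e) := by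
    rw [← integral_inner_sub_sq_smul hK hp, mSig_eq_integral_tilted, inv_inv]
    simpa only [weight_eq, meanVec] using tilted_eq (t • x, t, e)
  rw [mSig_eq, inv_inv, map_smul]
  module

end Denoiser

theorem gaussian_plus_excess_general {d : ℕ} {p : Measure (EuclideanSpace ℝ (Fin d))}
    [IsProbabilityMeasure p] {K : Set (EuclideanSpace ℝ (Fin d))} (hK : IsCompact K)
    (hp : ∀ᵐ y ∂p, y ∈ K) :
    IsExcess fun σ x => mSig p σ x - mSigG (meanVec p) (covMatrix p) σ x := by
  simpa only [sub_sub_sub_cancel_right] using (isExcess_mSig_sub hK hp).sub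
    (isExcess_mSigG_sub (posSemidef_covMatrix (memLp_two_id_of_ae_mem hK hp)) (meanVec p))

/-- for `p` supported in `B_R(0)` and any `δ ∈ (0,1)`, there are `σ₀ > 0` with
`1/(1+σ₀) ≤ δ` and a bounded function `H(x,σ) = H̃(x/(1+σ), 1/(1+σ))`, where `H̃` is continuous
and bounded on `B̄_R(0) × [−δ, δ]`, such that `m_σ(x) = m_σ^G(x) + H(x,σ)(1+σ)⁻²` for all
`x ∈ B̄_R(0)` and `σ ≥ σ₀`. -/
theorem gaussian_plus_excess {d : ℕ} (R : ℝ) (hR : 0 < R)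
    (p : Measure (EuclideanSpace ℝ (Fin d))) [IsProbabilityMeasure p]
    (hsupp : p (Metric.ball (0 : EuclideanSpace ℝ (Fin d)) R)ᶜ = 0)
    (δ : ℝ) (hδ : δ ∈ Set.Ioo (0 : ℝ) 1) :
    ∃ σ₀ : ℝ, 0 < σ₀ ∧ 1 / (1 + σ₀) ≤ δ ∧
      ∃ Htil : EuclideanSpace ℝ (Fin d) → ℝ → EuclideanSpace ℝ (Fin d),
        ContinuousOn (fun q : EuclideanSpace ℝ (Fin d) × ℝ => Htil q.1 q.2)
          (Metric.closedBall 0 R ×ˢ Set.Icc (-δ) δ) ∧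
        (∃ C : ℝ, ∀ x ∈ Metric.closedBall (0 : EuclideanSpace ℝ (Fin d)) R,
          ∀ t ∈ Set.Icc (-δ) δ, ‖Htil x t‖ ≤ C) ∧
        ∀ x ∈ Metric.closedBall (0 : EuclideanSpace ℝ (Fin d)) R, ∀ σ : ℝ, σ₀ ≤ σ →
          mSig p σ x = mSigG (meanVec p) (covMatrix p) σ x +
            ((1 + σ) ^ 2)⁻¹ • Htil ((1 + σ)⁻¹ • x) ((1 + σ)⁻¹) := by
  have hp : ∀ᵐ y ∂p, y ∈ Metric.closedBall 0 R :=
    measure_mono_null (Set.compl_subset_compl.2 Metric.ball_subset_closedBall) hsupp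
  obtain ⟨σ₀, hσ₀, hσ₀δ, H, hH, hbound, excess_eq⟩ := (gaussian_plus_excess_general
    (isCompact_closedBall 0 R) hp).exists_continuousOn_bounded (isCompact_closedBall 0 R) hδ
  exact ⟨σ₀, hσ₀, hσ₀δ, H, hH, hbound,
    fun x _ σ hσ => sub_eq_iff_eq_add'.1 (excess_eq σ hσ x)⟩

end
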